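/- Let T_a be the random trigonometric polynomial of degree n with a ~ N(0, I_N), N = 2n+1. Then E[‖T_a‖_∞ / ‖T_a‖_p] ≍ (log N)^{1/2} for each 1 ≤ p < ∞, and E[‖T_a‖_q / ‖T_a‖_∞] ≍ (log N)^{-1/2} for each 1 ≤ q < ∞, with implied constants independent of n. -/

import Mathlib

open MeasureTheory ProbabilityTheory Real

/-- The random trigonometric polynomial
`T_a(x) = a₁ + ∑_{k=1}^n (a_{2k} √2 cos kx + a_{2k+1} √2 sin kx)`. -/
noncomputable def trigPoly (n : ℕ) (a : Fin (2 * n + 1) → ℝ) (x : ℝ) : ℝ :=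
  a ⟨0, by omega⟩ + ∑ k : Fin n,
    (a ⟨2 * k.1 + 1, by have := k.2; omega⟩ * Real.sqrt 2 * Real.cos ((k.1 + 1 : ℝ) * x)
      + a ⟨2 * k.1 + 2, by have := k.2; omega⟩ * Real.sqrt 2 * Real.sin ((k.1 + 1 : ℝ) * x))

/-- The normalized `L^p` norm on the torus `[0, 2π]`, for `1 ≤ p < ∞`. -/
noncomputable def torusLpNorm (p : ℝ) (f : ℝ → ℝ) : ℝ :=
  ((2 * π)⁻¹ * ∫ x in (0 : ℝ)..(2 * π), |f x| ^ p) ^ (1 / p)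

/-- The sup norm of a function on `[0, 2π]`. -/
noncomputable def supNorm (f : ℝ → ℝ) : ℝ :=
  ⨆ x : Set.Icc (0 : ℝ) (2 * π), |f x.1|


lemma sum_fin_split (n : ℕ) (f : Fin (2 * n + 1) → ℝ) :
    ∑ i, f i = f ⟨0, by omega⟩ + ∑ k : Fin n,
      (f ⟨2 * k.1 + 1, by have := k.2; omega⟩ + f ⟨2 * k.1 + 2, by have := k.2; omega⟩) := by
  induction n with
  | zero => simp
  | succ n ih =>
    have h := Fin.sum_univ_castSucc (n := 2 * n + 2) (f := f)
    have h2 := Fin.sum_univ_castSucc (n := 2 * n + 1) (f := fun i => f (Fin.castSucc i))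
    rw [Fin.sum_univ_castSucc (n := n)]
    have h3 := ih (fun i => f (Fin.castSucc (Fin.castSucc i)))
    refine h.trans ?_
    rw [h2, h3]
    simp [Fin.castSucc, Fin.last, add_assoc]
    rfl

noncomputable def bvec (n : ℕ) (x : ℝ) (i : Fin (2 * n + 1)) : ℝ :=
  if i.1 = 0 then 1 else
    if i.1 % 2 = 1 then Real.sqrt 2 * Real.cos (((i.1 / 2 : ℕ) + 1 : ℝ) * x)
    else Real.sqrt 2 * Real.sin (((((i.1 - 1) / 2 : ℕ) : ℝ) + 1) * x)

lemma bvec_odd (n : ℕ) (x : ℝ) (k : ℕ) (h : 2 * k + 1 < 2 * n + 1) :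
    bvec n x ⟨2 * k + 1, h⟩ = Real.sqrt 2 * Real.cos ((k + 1 : ℝ) * x) := by
  have h1 : (2 * k + 1) % 2 = 1 := by omega
  have h2 : (2 * k + 1) / 2 = k := by omega
  simp [bvec, h2]

lemma bvec_even (n : ℕ) (x : ℝ) (k : ℕ) (h : 2 * k + 2 < 2 * n + 1) :
    bvec n x ⟨2 * k + 2, h⟩ = Real.sqrt 2 * Real.sin ((k + 1 : ℝ) * x) := by
  have h1 : (2 * k + 2) % 2 = 0 := by omega
  have h2 : (2 * k + 1) / 2 = k := by omega
  simp [bvec, h2]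

lemma trigPoly_eq (n : ℕ) (a : Fin (2 * n + 1) → ℝ) (x : ℝ) :
    trigPoly n a x = ∑ i, a i * bvec n x i := by
  rw [sum_fin_split, trigPoly]
  congr 1
  · simp [bvec]
  · refine Finset.sum_congr rfl fun k _ => ?_
    rw [bvec_odd, bvec_even]; ring

lemma bvec_inner (n : ℕ) (x y : ℝ) :
    ∑ i, bvec n x i * bvec n y i = 1 + 2 * ∑ k ∈ Finset.range n, Real.cos ((k + 1 : ℝ) * (x - y)) := by
  rw [sum_fin_split]
  congr 1
  · simp [bvec]
  · rw [Finset.mul_sum, Finset.sum_range]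
    refine Finset.sum_congr rfl fun k _ => ?_
    rw [bvec_odd, bvec_even, bvec_odd, bvec_even, mul_sub, Real.cos_sub]
    have := Real.mul_self_sqrt (show (0:ℝ) ≤ 2 by norm_num)
    linear_combination (Real.cos ((k+1:ℝ)*x) * Real.cos ((k+1:ℝ)*y) + Real.sin ((k+1:ℝ)*x) * Real.sin ((k+1:ℝ)*y)) * this

lemma dirichlet (n : ℕ) (t : ℝ) :
    Real.sin (t / 2) * (1 + 2 * ∑ k ∈ Finset.range n, Real.cos ((k + 1 : ℝ) * t)) =
      Real.sin ((2 * n + 1 : ℝ) * (t / 2)) := by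
  induction n with
  | zero => simp
  | succ n ih =>
    rw [Finset.sum_range_succ]
    have e1 : ((2 * (n + 1 : ℕ) + 1 : ℝ)) * (t / 2) = (n + 1 : ℝ) * t + t / 2 := by push_cast; ring
    have e2 : (2 * n + 1 : ℝ) * (t / 2) = (n + 1 : ℝ) * t - t / 2 := by ring
    rw [e2, Real.sin_sub] at ih
    rw [e1, Real.sin_add]
    linear_combination ih

/-- the discrete nodes, shifted by `s` -/
noncomputable def node (n : ℕ) (s : ℝ) (j : Fin (2 * n + 1)) : ℝ := s + 2 * π * j.1 / (2 * n + 1)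

lemma node_inner (n : ℕ) (s : ℝ) (j l : Fin (2 * n + 1)) :
    ∑ i, bvec n (node n s j) i * bvec n (node n s l) i = if j = l then (2 * n + 1 : ℝ) else 0 := by
  rw [bvec_inner]
  split_ifs with h
  · subst h; simp; ring
  · have hN : (0:ℝ) < 2 * n + 1 := by positivity
    set t := node n s j - node n s l with ht
    have ht2 : t / 2 = π * (((j.1 : ℤ) - (l.1 : ℤ) : ℤ) : ℝ) / (2 * n + 1) := by
      rw [ht, node, node]; push_cast; field_simp; ring
    have hd := dirichlet n t
    have h0 : Real.sin ((2 * n + 1 : ℝ) * (t / 2)) = 0 := by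
      rw [ht2]
      have : (2 * n + 1 : ℝ) * (π * (((j.1 : ℤ) - (l.1 : ℤ) : ℤ) : ℝ) / (2 * n + 1)) =
        (((j.1 : ℤ) - (l.1 : ℤ) : ℤ) : ℝ) * π := by field_simp
      rw [this, Real.sin_int_mul_pi]
    rw [h0] at hd
    rcases mul_eq_zero.1 hd with h1 | h1
    · exfalso
      rw [Real.sin_eq_zero_iff] at h1
      obtain ⟨m, hm⟩ := h1
      rw [ht2] at hm
      have hm2 : (m : ℝ) * (2 * n + 1) = (((j.1 : ℤ) - (l.1 : ℤ) : ℤ) : ℝ) := by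
        field_simp at hm; linarith
      have hm3 : m * (2 * n + 1) = ((j.1 : ℤ) - (l.1 : ℤ) : ℤ) := by exact_mod_cast hm2
      have hj := j.2
      have hl := l.2
      have hne : (j.1 : ℤ) ≠ l.1 := by
        intro hcase; exact h (Fin.ext (by exact_mod_cast hcase))
      have hm0 : m ≠ 0 := by rintro rfl; simp at hm3; omega
      rcases lt_or_gt_of_ne hm0 with hcase | hcase
      · have : m ≤ -1 := by omega
        nlinarith
      · have : 1 ≤ m := by omega
        nlinarith
    · exact h1

noncomputable def Amat (n : ℕ) (s : ℝ) : Matrix (Fin (2 * n + 1)) (Fin (2 * n + 1)) ℝ :=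
  fun j i => bvec n (node n s j) i / Real.sqrt (2 * n + 1)

lemma Amat_mul (n : ℕ) (s : ℝ) : Amat n s * (Amat n s).transpose = 1 := by
  ext j l
  have hN : (0:ℝ) < 2 * n + 1 := by positivity
  simp only [Matrix.mul_apply, Matrix.transpose_apply, Amat, Matrix.one_apply]
  have := node_inner n s j l
  have e : ∀ i, bvec n (node n s j) i / √(2 * n + 1 : ℝ) * (bvec n (node n s l) i / √(2 * n + 1 : ℝ))
      = (bvec n (node n s j) i * bvec n (node n s l) i) / (2 * n + 1) := by
    intro i
    rw [div_mul_div_comm, Real.mul_self_sqrt hN.le]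
  simp_rw [e]
  rw [← Finset.sum_div, this]
  split_ifs <;> field_simp
  simp

lemma Amat_mulVec (n : ℕ) (s : ℝ) (a : Fin (2 * n + 1) → ℝ) (j : Fin (2 * n + 1)) :
    (Amat n s).mulVec a j = trigPoly n a (node n s j) / Real.sqrt (2 * n + 1) := by
  rw [trigPoly_eq, Finset.sum_div]
  simp only [Matrix.mulVec, dotProduct, Amat]
  refine Finset.sum_congr rfl fun i _ => by ring

lemma Amat_norm (n : ℕ) (s : ℝ) (a : Fin (2 * n + 1) → ℝ) :
    ∑ j, ((Amat n s).mulVec a j) ^ 2 = ∑ i, a i ^ 2 := by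
  have h : (Amat n s).transpose * Amat n s = 1 := mul_eq_one_comm.1 (Amat_mul n s)
  have h1 : (Amat n s).mulVec a ⬝ᵥ (Amat n s).mulVec a = a ⬝ᵥ a := by
    rw [Matrix.dotProduct_mulVec, Matrix.vecMul_mulVec, h, ]
    simp
  simpa [dotProduct, sq] using h1

lemma discrete_parseval (n : ℕ) (s : ℝ) (a : Fin (2 * n + 1) → ℝ) :
    ∑ j, (trigPoly n a (node n s j)) ^ 2 = (2 * n + 1) * ∑ i, a i ^ 2 := by
  have hN : (0:ℝ) < 2 * n + 1 := by positivity
  rw [← Amat_norm n s a]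
  simp_rw [Amat_mulVec, div_pow, Real.sq_sqrt hN.le]
  rw [Finset.mul_sum]
  refine Finset.sum_congr rfl fun i _ => by field_simp

noncomputable abbrev gmu (n : ℕ) : Measure (Fin (2 * n + 1) → ℝ) :=
  Measure.pi fun _ => gaussianReal 0 1

lemma map_Amat (n : ℕ) (s : ℝ) :
    (gmu n).map (fun a => (Amat n s).mulVec a) = gmu n := by
  let L : EuclideanSpace ℝ (Fin (2 * n + 1)) →ₗᵢ[ℝ] EuclideanSpace ℝ (Fin (2 * n + 1)) :=
    { toLinearMap := Matrix.toEuclideanLin (Amat n s)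
      norm_map' := by
        intro x
        rw [EuclideanSpace.norm_eq, EuclideanSpace.norm_eq]
        congr 1
        have := Amat_norm n s x.ofLp
        simpa [Matrix.toLpLin_apply] using this }
  let E := L.toLinearIsometryEquiv rfl
  have h1 := stdGaussian_map E
  rw [← map_pi_eq_stdGaussian] at h1
  have h2 := congrArg (Measure.map (WithLp.ofLp (p := 2) (V := Fin (2 * n + 1) → ℝ))) h1
  rw [Measure.map_map, Measure.map_map, Measure.map_map] at h2
  · have e1 : (WithLp.ofLp (p := 2) (V := Fin (2 * n + 1) → ℝ)) ∘ E ∘ (WithLp.toLp 2) = fun a => (Amat n s).mulVec a := by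
      ext a j
      simp [E, L]
    have e2 : (WithLp.ofLp (p := 2) (V := Fin (2 * n + 1) → ℝ)) ∘ (WithLp.toLp 2) = id := by
      ext a j; rfl
    rw [Function.comp_assoc, e1, e2, Measure.map_id] at h2
    exact h2
  all_goals fun_prop

lemma continuous_trig (n : ℕ) : Continuous (fun z : (Fin (2 * n + 1) → ℝ) × ℝ => trigPoly n z.1 z.2) := by
  unfold trigPoly
  fun_prop

lemma continuous_trig_x (n : ℕ) (a : Fin (2 * n + 1) → ℝ) : Continuous (trigPoly n a) :=
  (continuous_trig n).comp (by fun_prop : Continuous fun x : ℝ => (a, x))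

lemma bdd_trig (n : ℕ) (a : Fin (2 * n + 1) → ℝ) :
    BddAbove (Set.range fun x : Set.Icc (0 : ℝ) (2 * π) => |trigPoly n a x.1|) := by
  have : IsCompact (Set.range fun x : Set.Icc (0 : ℝ) (2 * π) => |trigPoly n a x.1|) :=
    isCompact_range (by have := continuous_trig_x n a; fun_prop)
  exact this.bddAbove

lemma le_supNorm (n : ℕ) (a : Fin (2 * n + 1) → ℝ) {x : ℝ} (hx : x ∈ Set.Icc (0 : ℝ) (2 * π)) :
    |trigPoly n a x| ≤ supNorm (trigPoly n a) :=
  le_ciSup (bdd_trig n a) ⟨x, hx⟩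

lemma zero_mem_torus : (0 : ℝ) ∈ Set.Icc (0 : ℝ) (2 * π) := ⟨le_rfl, by positivity⟩

lemma supNorm_nonneg' (n : ℕ) (a : Fin (2 * n + 1) → ℝ) : 0 ≤ supNorm (trigPoly n a) :=
  (abs_nonneg _).trans (le_supNorm n a zero_mem_torus)

lemma exists_supNorm (n : ℕ) (a : Fin (2 * n + 1) → ℝ) :
    ∃ x ∈ Set.Icc (0 : ℝ) (2 * π), |trigPoly n a x| = supNorm (trigPoly n a) := by
  obtain ⟨x, hx, h⟩ := isCompact_Icc.exists_isMaxOn (s := Set.Icc (0 : ℝ) (2 * π)) ⟨0, zero_mem_torus⟩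
    (f := fun x => |trigPoly n a x|) (by have := continuous_trig_x n a; fun_prop)
  refine ⟨x, hx, le_antisymm (le_supNorm n a hx) ?_⟩
  have : Nonempty (Set.Icc (0 : ℝ) (2 * π)) := ⟨⟨0, zero_mem_torus⟩⟩
  exact ciSup_le fun y => h y.2

lemma continuous_supNorm (n : ℕ) : Continuous fun a : Fin (2 * n + 1) → ℝ => supNorm (trigPoly n a) := by
  have h := IsCompact.continuous_sSup (f := fun (a : Fin (2 * n + 1) → ℝ) (x : ℝ) => |trigPoly n a x|)
    (K := Set.Icc (0 : ℝ) (2 * π)) isCompact_Icc ((continuous_trig n).abs)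
  convert h using 2 with a
  rw [supNorm, sSup_image', ]

lemma node_mem (n : ℕ) (j : Fin (2 * n + 1)) : node n 0 j ∈ Set.Icc (0 : ℝ) (2 * π) := by
  have hj : (j.1 : ℝ) ≤ 2 * n + 1 := by exact_mod_cast j.2.le
  have hN : (0:ℝ) < 2 * n + 1 := by positivity
  have := Real.pi_pos
  constructor
  · unfold node; positivity
  · unfold node
    rw [zero_add, div_le_iff₀ hN]
    gcongr

lemma l2_le_sup (n : ℕ) (a : Fin (2 * n + 1) → ℝ) : ∑ i, a i ^ 2 ≤ supNorm (trigPoly n a) ^ 2 := by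
  have hN : (0:ℝ) < 2 * n + 1 := by positivity
  have h := discrete_parseval n 0 a
  have h2 : ∑ j, (trigPoly n a (node n 0 j)) ^ 2 ≤ ∑ j : Fin (2 * n + 1), supNorm (trigPoly n a) ^ 2 := by
    refine Finset.sum_le_sum fun j _ => ?_
    rw [← sq_abs]
    have := le_supNorm n a (node_mem n j)
    gcongr
  rw [h] at h2
  simp at h2
  exact le_of_mul_le_mul_left h2 hN

lemma coef_le (n : ℕ) (a : Fin (2 * n + 1) → ℝ) (i) : |a i| ≤ supNorm (trigPoly n a) := by
  refine abs_le_of_sq_le_sq ?_ (supNorm_nonneg' n a)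
  exact (Finset.single_le_sum (f := fun i => a i ^ 2) (fun i _ => sq_nonneg _) (Finset.mem_univ i)).trans
    (l2_le_sup n a)

lemma abs_cos_sub_le (x y : ℝ) : |Real.cos x - Real.cos y| ≤ |x - y| := by
  have := Real.lipschitzWith_cos.dist_le_mul x y
  simpa [Real.dist_eq] using this

lemma abs_sin_sub_le (x y : ℝ) : |Real.sin x - Real.sin y| ≤ |x - y| := by
  have := Real.lipschitzWith_sin.dist_le_mul x y
  simpa [Real.dist_eq] using this

lemma trig_lip (n : ℕ) (a : Fin (2 * n + 1) → ℝ) (x y : ℝ) :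
    |trigPoly n a x - trigPoly n a y| ≤ (2 * n + 1) ^ 2 * supNorm (trigPoly n a) * |x - y| := by
  set M := supNorm (trigPoly n a) with hM
  have hM0 : 0 ≤ M := supNorm_nonneg' n a
  have hs : √2 ≤ (2:ℝ) := by rw [Real.sqrt_le_left (by norm_num)]; norm_num
  have e : trigPoly n a x - trigPoly n a y = ∑ k : Fin n,
    (a ⟨2 * k.1 + 1, by have := k.2; omega⟩ * Real.sqrt 2 * (Real.cos ((k.1 + 1 : ℝ) * x) - Real.cos ((k.1 + 1 : ℝ) * y))
      + a ⟨2 * k.1 + 2, by have := k.2; omega⟩ * Real.sqrt 2 * (Real.sin ((k.1 + 1 : ℝ) * x) - Real.sin ((k.1 + 1 : ℝ) * y))) := by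
    simp only [trigPoly]
    rw [add_sub_add_left_eq_sub, ← Finset.sum_sub_distrib]
    refine Finset.sum_congr rfl fun k _ => by ring
  rw [e]
  have hb : ∀ k : Fin n, |a ⟨2 * k.1 + 1, by have := k.2; omega⟩ * Real.sqrt 2 * (Real.cos ((k.1 + 1 : ℝ) * x) - Real.cos ((k.1 + 1 : ℝ) * y))
      + a ⟨2 * k.1 + 2, by have := k.2; omega⟩ * Real.sqrt 2 * (Real.sin ((k.1 + 1 : ℝ) * x) - Real.sin ((k.1 + 1 : ℝ) * y))| ≤
      4 * M * (n * |x - y|) := by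
    intro k
    have hk : (k.1 + 1 : ℝ) ≤ n := by exact_mod_cast k.2
    have hk0 : (0:ℝ) ≤ k.1 + 1 := by positivity
    have h1 : |(k.1 + 1 : ℝ) * x - (k.1 + 1 : ℝ) * y| ≤ n * |x - y| := by
      rw [← mul_sub, abs_mul, abs_of_nonneg hk0]; gcongr
    have hc := (abs_cos_sub_le ((k.1 + 1 : ℝ) * x) ((k.1 + 1 : ℝ) * y)).trans h1
    have hsn := (abs_sin_sub_le ((k.1 + 1 : ℝ) * x) ((k.1 + 1 : ℝ) * y)).trans h1
    have hA := coef_le n a ⟨2 * k.1 + 1, by have := k.2; omega⟩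
    have hB := coef_le n a ⟨2 * k.1 + 2, by have := k.2; omega⟩
    refine (abs_add_le _ _).trans ?_
    rw [abs_mul, abs_mul, abs_mul, abs_mul, abs_of_nonneg (Real.sqrt_nonneg 2)]
    calc _ ≤ M * 2 * (n * |x - y|) + M * 2 * (n * |x - y|) := by gcongr
      _ = _ := by ring
  calc _ ≤ ∑ k : Fin n, 4 * M * (n * |x - y|) :=
        (Finset.abs_sum_le_sum_abs _ _).trans (Finset.sum_le_sum fun k _ => hb k)
    _ = (4 * n ^ 2) * M * |x - y| := by simp; ring
    _ ≤ _ := by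
      gcongr
      nlinarith [(Nat.cast_nonneg n : (0:ℝ) ≤ n)]

lemma localize (n : ℕ) (a : Fin (2 * n + 1) → ℝ) (Φ : ℝ → ℝ) (hΦ : Continuous Φ) (h0 : ∀ u, 0 ≤ Φ u)
    (hm : ∀ u v, 0 ≤ u → u ≤ v → Φ u ≤ Φ v) :
    Φ (supNorm (trigPoly n a) / 2) ≤ 2 * (2 * n + 1) ^ 2 * ∫ x in (0:ℝ)..(2 * π), Φ |trigPoly n a x| := by
  set M := supNorm (trigPoly n a) with hM
  have hM0 : 0 ≤ M := supNorm_nonneg' n a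
  obtain ⟨x0, hx0, hmax⟩ := exists_supNorm n a
  have hN : (1:ℝ) ≤ 2 * n + 1 := by have : (0:ℝ) ≤ n := Nat.cast_nonneg n; linarith
  set h : ℝ := 1 / (2 * (2 * n + 1) ^ 2) with hh
  have hpos : 0 < h := by positivity
  have hle : h ≤ 1 := by
    rw [hh, div_le_one (by positivity)]; nlinarith
  have hpi := Real.pi_gt_three
  set α := max (x0 - h) 0 with hα
  have hα0 : 0 ≤ α := le_max_right _ _
  have hα1 : α + h ≤ 2 * π := by
    rcases max_cases (x0 - h) 0 with ⟨h1, _⟩ | ⟨h1, _⟩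
    · rw [hα, h1]; linarith [hx0.2]
    · rw [hα, h1]; linarith
  have hc : Continuous fun x => Φ |trigPoly n a x| := by
    have := continuous_trig_x n a; fun_prop
  have h1 : ∫ x in α..(α + h), Φ |trigPoly n a x| ≤ ∫ x in (0:ℝ)..(2 * π), Φ |trigPoly n a x| :=
    intervalIntegral.integral_mono_interval hα0 (by linarith) hα1
      (Filter.Eventually.of_forall fun x => h0 _) (hc.intervalIntegrable _ _)
  have h2 : ∫ x in α..(α + h), Φ (M / 2) ≤ ∫ x in α..(α + h), Φ |trigPoly n a x| := by
    refine intervalIntegral.integral_mono_on (by linarith) (by simp) (hc.intervalIntegrable _ _) ?_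
    intro x hx
    apply hm _ _ (by positivity)
    have hd : |x0 - x| ≤ h := by
      rw [abs_le]
      constructor
      · rcases max_cases (x0 - h) 0 with ⟨h1, _⟩ | ⟨h1, _⟩
        · rw [hα, h1] at hx; linarith [hx.2]
        · rw [hα, h1] at hx; linarith [hx.2, hx0.1]
      · linarith [hx.1, le_max_left (x0 - h) 0]
    have hl := trig_lip n a x0 x
    have hl2 : (2 * n + 1 : ℝ) ^ 2 * M * |x0 - x| ≤ M / 2 := by
      calc _ ≤ (2 * n + 1 : ℝ) ^ 2 * M * h := by gcongr
        _ = M / 2 := by rw [hh]; field_simp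
    have := abs_sub_abs_le_abs_sub (trigPoly n a x0) (trigPoly n a x)
    rw [hmax] at this
    linarith
  rw [intervalIntegral.integral_const] at h2
  simp only [add_sub_cancel_left, smul_eq_mul] at h2
  have h3 := h2.trans h1
  calc Φ (M / 2) = 2 * (2 * n + 1) ^ 2 * (h * Φ (M / 2)) := by rw [hh]; field_simp
    _ ≤ _ := by gcongr

lemma trig_periodic (n : ℕ) (a : Fin (2 * n + 1) → ℝ) : Function.Periodic (trigPoly n a) (2 * π) := by
  intro x
  simp only [trigPoly]
  congr 1
  refine Finset.sum_congr rfl fun k _ => ?_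
  have e : (k.1 + 1 : ℝ) * (x + 2 * π) = (k.1 + 1 : ℝ) * x + ((k.1 + 1 : ℕ) : ℝ) * (2 * π) := by push_cast; ring
  rw [e, Real.cos_add_nat_mul_two_pi, Real.sin_add_nat_mul_two_pi]

lemma parseval (n : ℕ) (a : Fin (2 * n + 1) → ℝ) :
    ∫ x in (0:ℝ)..(2 * π), trigPoly n a x ^ 2 = 2 * π * ∑ i, a i ^ 2 := by
  have hN : (0:ℝ) < 2 * n + 1 := by positivity
  have hc := continuous_trig_x n a
  have hper : Function.Periodic (fun x => trigPoly n a x ^ 2) (2 * π) := by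
    intro x; simp only [trig_periodic n a x]
  have h1 : ∀ j : Fin (2 * n + 1), ∫ s in (0:ℝ)..(2 * π), trigPoly n a (node n s j) ^ 2 =
      ∫ x in (0:ℝ)..(2 * π), trigPoly n a x ^ 2 := by
    intro j
    have := intervalIntegral.integral_comp_add_right (a := 0) (b := 2 * π) (fun x => trigPoly n a x ^ 2) (2 * π * j.1 / (2 * n + 1))
    simp only [node]
    rw [this, zero_add, add_comm (2 * π)]
    have h2 := hper.intervalIntegral_add_eq (2 * π * j.1 / (2 * n + 1)) 0
    rw [zero_add] at h2
    exact h2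
  have h2 : ∫ s in (0:ℝ)..(2 * π), ∑ j, trigPoly n a (node n s j) ^ 2 =
      ∫ s in (0:ℝ)..(2 * π), (2 * n + 1) * ∑ i, a i ^ 2 := by
    simp_rw [discrete_parseval]
  rw [intervalIntegral.integral_finsetSum] at h2
  · simp_rw [h1] at h2
    simp at h2
    have : (2 * n + 1 : ℝ) ≠ 0 := hN.ne'
    exact h2.resolve_right this
  · intro j _
    apply Continuous.intervalIntegrable
    unfold node
    fun_prop

lemma law_point (n : ℕ) (x : ℝ) :
    MeasurePreserving (fun a => trigPoly n a x / √(2 * n + 1 : ℝ)) (gmu n) (gaussianReal 0 1) := by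
  have h1 : MeasurePreserving (fun a => (Amat n x).mulVec a) (gmu n) (gmu n) :=
    ⟨(by fun_prop : Continuous fun a => (Amat n x).mulVec a).measurable, map_Amat n x⟩
  have h2 : MeasurePreserving (Function.eval (⟨0, by omega⟩ : Fin (2 * n + 1))) (gmu n) (gaussianReal 0 1) :=
    measurePreserving_eval _ _
  have h3 := h2.comp h1
  convert h3 using 1
  ext a
  simp [Amat_mulVec, node]

/-- normalised average over the torus of `F (T / √N)` -/
noncomputable def avg (n : ℕ) (F : ℝ → ℝ) (a : Fin (2 * n + 1) → ℝ) : ℝ :=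
  (2 * π)⁻¹ * ∫ x in (0:ℝ)..(2 * π), F (trigPoly n a x / √(2 * n + 1 : ℝ))

lemma avg_spec (n : ℕ) (F : ℝ → ℝ) (hF : Integrable F (gaussianReal 0 1)) :
    Integrable (avg n F) (gmu n) ∧ ∫ a, avg n F a ∂(gmu n) = ∫ u, F u ∂(gaussianReal 0 1) := by
  have hpi : 0 < 2 * π := by positivity
  set ν : Measure ℝ := ENNReal.ofReal ((2 * π)⁻¹) • (volume.restrict (Set.Ioc 0 (2 * π))) with hν
  have hprob : IsProbabilityMeasure ν := by
    constructor
    rw [hν]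
    simp only [Measure.smul_apply, Measure.restrict_apply MeasurableSet.univ, Set.univ_inter, Real.volume_Ioc, sub_zero, smul_eq_mul]
    rw [← ENNReal.ofReal_mul (by positivity), inv_mul_cancel₀ hpi.ne', ENNReal.ofReal_one]
  have hmeas : Measurable (fun z : (Fin (2 * n + 1) → ℝ) × ℝ => trigPoly n z.1 z.2 / √(2 * n + 1 : ℝ)) :=
    ((continuous_trig n).div_const _).measurable
  have hmp : MeasurePreserving (fun z : (Fin (2 * n + 1) → ℝ) × ℝ => trigPoly n z.1 z.2 / √(2 * n + 1 : ℝ))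
      ((gmu n).prod ν) (gaussianReal 0 1) := by
    refine ⟨hmeas, ?_⟩
    ext s hs
    rw [Measure.map_apply hmeas hs, Measure.prod_apply_symm (hmeas hs)]
    have : ∀ x : ℝ, (gmu n) ((fun a => (a, x)) ⁻¹' ((fun z : (Fin (2 * n + 1) → ℝ) × ℝ => trigPoly n z.1 z.2 / √(2 * n + 1 : ℝ)) ⁻¹' s))
        = gaussianReal 0 1 s := fun x => (law_point n x).measure_preimage hs.nullMeasurableSet
    simp_rw [this]
    simp
  have hI : Integrable (fun z : (Fin (2 * n + 1) → ℝ) × ℝ => F (trigPoly n z.1 z.2 / √(2 * n + 1 : ℝ))) ((gmu n).prod ν) :=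
    hmp.integrable_comp_of_integrable hF
  have havg : ∀ a, avg n F a = ∫ x, F (trigPoly n a x / √(2 * n + 1 : ℝ)) ∂ν := by
    intro a
    rw [hν, integral_smul_measure, avg, intervalIntegral.integral_of_le hpi.le]
    rw [ENNReal.toReal_ofReal (by positivity), smul_eq_mul]
  have e : avg n F = fun a => ∫ x, F (trigPoly n a x / √(2 * n + 1 : ℝ)) ∂ν := funext havg
  rw [e]
  refine ⟨hI.integral_prod_left, ?_⟩
  rw [← integral_prod _ hI]
  rw [← hmp.map_eq, integral_map hmeas.aemeasurable]
  rw [hmp.map_eq]; exact hF.aestronglyMeasurable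

lemma avg_nonneg (n : ℕ) (F : ℝ → ℝ) (h : ∀ u, 0 ≤ F u) (a) : 0 ≤ avg n F a := by
  unfold avg
  have := intervalIntegral.integral_nonneg (μ := volume) (show (0:ℝ) ≤ 2 * π by positivity) (f := fun x => F (trigPoly n a x / √(2 * n + 1 : ℝ))) (fun x _ => h _)
  positivity

lemma integrable_gexp : Integrable (fun u : ℝ => Real.exp (u ^ 2 / 4)) (gaussianReal 0 1) := by
  rw [gaussianReal_of_var_ne_zero _ one_ne_zero]
  rw [integrable_withDensity_iff_integrable_smul₀' (by fun_prop) (by simp [gaussianPDF])]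
  have h := (integrable_exp_neg_mul_sq (b := 1/4) (by norm_num)).const_mul ((√(2 * π))⁻¹)
  refine h.congr (Filter.Eventually.of_forall fun x => ?_)
  simp only [toReal_gaussianPDF, gaussianPDFReal, smul_eq_mul, NNReal.coe_one, mul_one, sub_zero]
  rw [mul_assoc, ← Real.exp_add]
  congr 2; ring

lemma integrable_gpow (q : ℝ) (hq : 1 ≤ q) : Integrable (fun u : ℝ => |u| ^ q) (gaussianReal 0 1) := by
  have hq0 : 0 < q := by linarith
  have := (memLp_id_gaussianReal' (μ := 0) (v := 1) (ENNReal.ofReal q) ENNReal.ofReal_ne_top).integrable_norm_rpow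
    (by simpa using hq0) ENNReal.ofReal_ne_top
  simpa [ENNReal.toReal_ofReal hq0.le] using this

lemma integrable_gneg : Integrable (fun u : ℝ => Real.exp (-(u ^ 2) / 2)) (gaussianReal 0 1) := by
  refine Integrable.of_bound (C := 1) (by fun_prop) (Filter.Eventually.of_forall fun x => ?_)
  rw [Real.norm_eq_abs, abs_of_pos (Real.exp_pos _), Real.exp_le_one_iff]
  nlinarith [sq_nonneg x]

lemma integral_gneg : ∫ u : ℝ, Real.exp (-(u ^ 2) / 2) ∂(gaussianReal 0 1) = (√2)⁻¹ := by
  rw [integral_gaussianReal_eq_integral_smul one_ne_zero]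
  have e : ∀ x : ℝ, gaussianPDFReal 0 1 x • Real.exp (-(x ^ 2) / 2) = (√(2 * π))⁻¹ * Real.exp (-1 * x ^ 2) := by
    intro x
    simp only [gaussianPDFReal, smul_eq_mul, NNReal.coe_one, mul_one, sub_zero]
    rw [mul_assoc, ← Real.exp_add]
    congr 2; ring
  simp_rw [e]
  rw [integral_const_mul, integral_gaussian, div_one, Real.sqrt_mul (by norm_num), mul_inv, mul_assoc,
    inv_mul_cancel₀ (by positivity), mul_one]

lemma exp_sum_spec (n : ℕ) : Integrable (fun a => Real.exp (-(∑ i, a i ^ 2) / 2)) (gmu n) ∧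
    ∫ a, Real.exp (-(∑ i, a i ^ 2) / 2) ∂(gmu n) = ((√2)⁻¹) ^ (2 * n + 1) := by
  have e : (fun a : Fin (2 * n + 1) → ℝ => Real.exp (-(∑ i, a i ^ 2) / 2)) =
      fun a => ∏ i, Real.exp (-(a i ^ 2) / 2) := by
    ext a
    rw [← Real.exp_sum, ← Finset.sum_div, Finset.sum_neg_distrib]
  rw [e]
  constructor
  · exact Integrable.fintype_prod (f := fun _ u => Real.exp (-(u ^ 2) / 2)) fun _ => integrable_gneg
  · rw [integral_fintype_prod_eq_prod (f := fun _ u => Real.exp (-(u ^ 2) / 2))]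
    simp [integral_gneg]

lemma gauss_tail (t : ℝ) :
    Real.exp (-2 - t ^ 2) ≤ 1 - (gaussianReal 0 1).real (Set.Icc (-t) t) := by
  have h0 : Real.exp (-2 - t ^ 2) ≤ (gaussianReal 0 1).real (Set.Ioc t (t + 1)) := by
    rw [measureReal_def, gaussianReal_apply_eq_integral _ one_ne_zero, ENNReal.toReal_ofReal
      (integral_nonneg fun x => gaussianPDFReal_nonneg _ _ _)]
    rw [← intervalIntegral.integral_of_le (by linarith)]
    have : ∫ x in t..(t + 1), Real.exp (-2 - t ^ 2) ≤ ∫ x in t..(t + 1), gaussianPDFReal 0 1 x := by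
      refine intervalIntegral.integral_mono_on (by linarith) (by simp)
        ((integrable_gaussianPDFReal 0 1).intervalIntegrable) fun x hx => ?_
      simp only [gaussianPDFReal, NNReal.coe_one, mul_one, sub_zero]
      have h1 : Real.exp (-1) ≤ (√(2 * π))⁻¹ := by
        rw [Real.exp_neg]
        apply inv_anti₀ (by positivity)
        rw [Real.sqrt_le_left (by positivity)]
        have := Real.exp_one_gt_d9
        have := Real.pi_lt_d2
        nlinarith
      have h2 : Real.exp (-1 - t ^ 2) ≤ Real.exp (-x ^ 2 / 2) := by
        apply Real.exp_le_exp.2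
        nlinarith [hx.1, hx.2, sq_nonneg (t - 1)]
      calc Real.exp (-2 - t ^ 2) = Real.exp (-1) * Real.exp (-1 - t ^ 2) := by rw [← Real.exp_add]; ring_nf
        _ ≤ _ := by gcongr
    simpa using this
  have h1 : (gaussianReal 0 1).real (Set.Ioc t (t + 1)) + (gaussianReal 0 1).real (Set.Icc (-t) t) ≤ 1 := by
    rw [← measureReal_union _ measurableSet_Icc]
    · exact measureReal_le_one
    · rw [Set.disjoint_left]
      intro x hx hxb
      exact absurd hx.1 (not_lt.2 hxb.2)
  linarith

lemma sup_small (n : ℕ) (t : ℝ) :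
    (gmu n).real {a | supNorm (trigPoly n a) ≤ t * √(2 * n + 1 : ℝ)} ≤ Real.exp (2 + t ^ 2) / (2 * n + 1) := by
  have hN : (0:ℝ) < 2 * n + 1 := by positivity
  have h1 : MeasurePreserving (fun a => (Amat n 0).mulVec a) (gmu n) (gmu n) :=
    ⟨(by fun_prop : Continuous fun a => (Amat n 0).mulVec a).measurable, map_Amat n 0⟩
  have hsub : {a | supNorm (trigPoly n a) ≤ t * √(2 * n + 1 : ℝ)} ⊆
      (fun a => (Amat n 0).mulVec a) ⁻¹' (Set.univ.pi fun _ => Set.Icc (-t) t) := by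
    intro a ha j _
    have hab : supNorm (trigPoly n a) ≤ t * √(2 * n + 1 : ℝ) := ha
    have := (le_supNorm n a (node_mem n j)).trans hab
    show (Amat n 0).mulVec a j ∈ Set.Icc (-t) t
    rw [Amat_mulVec]
    apply abs_le.1
    rw [abs_div, abs_of_pos (Real.sqrt_pos.2 hN), div_le_iff₀ (Real.sqrt_pos.2 hN)]
    exact this
  have hms : MeasurableSet (Set.univ.pi fun _ : Fin (2 * n + 1) => Set.Icc (-t) t) :=
    MeasurableSet.univ_pi fun _ => measurableSet_Icc
  have h2 : (gmu n).real {a | supNorm (trigPoly n a) ≤ t * √(2 * n + 1 : ℝ)} ≤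
      ((gaussianReal 0 1).real (Set.Icc (-t) t)) ^ (2 * n + 1) := by
    refine (measureReal_mono hsub).trans ?_
    rw [measureReal_def, h1.measure_preimage hms.nullMeasurableSet, Measure.pi_pi]
    simp [measureReal_def]
  refine h2.trans ?_
  have h3 := gauss_tail t
  set r := Real.exp (-2 - t ^ 2) with hr
  have hr0 : 0 < r := Real.exp_pos _
  have h4 : (gaussianReal 0 1).real (Set.Icc (-t) t) ≤ Real.exp (-r) := by
    have := Real.add_one_le_exp (-r); linarith
  calc _ ≤ (Real.exp (-r)) ^ (2 * n + 1) := by gcongr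
    _ = Real.exp (-((2 * n + 1) * r)) := by rw [← Real.exp_nat_mul]; push_cast; ring_nf
    _ = (Real.exp ((2 * n + 1) * r))⁻¹ := Real.exp_neg _
    _ ≤ ((2 * n + 1) * r)⁻¹ := by
      apply inv_anti₀ (by positivity)
      have := Real.add_one_le_exp ((2 * n + 1) * r); linarith
    _ = _ := by
      have : Real.exp (2 + t ^ 2) = r⁻¹ := by rw [hr, ← Real.exp_neg]; ring_nf
      rw [this, mul_inv, div_eq_mul_inv, mul_comm]

/-- the normalised first moment -/
noncomputable def l1 (n : ℕ) (a : Fin (2 * n + 1) → ℝ) : ℝ :=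
  (2 * π)⁻¹ * ∫ x in (0:ℝ)..(2 * π), |trigPoly n a x|

lemma continuous_rpow_trig (n : ℕ) (a : Fin (2 * n + 1) → ℝ) (p : ℝ) (hp : 1 ≤ p) :
    Continuous fun x => |trigPoly n a x| ^ p :=
  (continuous_trig_x n a).abs.rpow_const fun _ => Or.inr (by linarith)

lemma l1_nonneg (n : ℕ) (a : Fin (2 * n + 1) → ℝ) : 0 ≤ l1 n a := by
  unfold l1
  have := intervalIntegral.integral_nonneg (μ := volume) (show (0:ℝ) ≤ 2 * π by positivity) (f := fun x => |trigPoly n a x|) (fun x _ => abs_nonneg _)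
  positivity

lemma int_rpow_nonneg (n : ℕ) (a : Fin (2 * n + 1) → ℝ) (p : ℝ) :
    0 ≤ ∫ x in (0:ℝ)..(2 * π), |trigPoly n a x| ^ p :=
  intervalIntegral.integral_nonneg (by positivity) fun x _ => by positivity

lemma lp_nonneg (n : ℕ) (a : Fin (2 * n + 1) → ℝ) (p : ℝ) : 0 ≤ torusLpNorm p (trigPoly n a) := by
  unfold torusLpNorm
  have := int_rpow_nonneg n a p
  positivity

lemma lp_le_sup (n : ℕ) (a : Fin (2 * n + 1) → ℝ) (q : ℝ) (hq : 1 ≤ q) :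
    torusLpNorm q (trigPoly n a) ≤ supNorm (trigPoly n a) := by
  have hM := supNorm_nonneg' n a
  have hpi : 0 < 2 * π := by positivity
  have h0 := int_rpow_nonneg n a q
  have h1 : ∫ x in (0:ℝ)..(2 * π), |trigPoly n a x| ^ q ≤ ∫ x in (0:ℝ)..(2 * π), supNorm (trigPoly n a) ^ q := by
    refine intervalIntegral.integral_mono_on hpi.le ((continuous_rpow_trig n a q hq).intervalIntegrable _ _) (by simp) fun x hx => ?_
    exact Real.rpow_le_rpow (abs_nonneg _) (le_supNorm n a hx) (by linarith)
  rw [intervalIntegral.integral_const, sub_zero, smul_eq_mul] at h1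
  unfold torusLpNorm
  calc _ ≤ ((2 * π)⁻¹ * (2 * π * supNorm (trigPoly n a) ^ q)) ^ (1 / q) := by
        apply Real.rpow_le_rpow (by positivity) (by gcongr) (by positivity)
    _ = supNorm (trigPoly n a) := by
      rw [inv_mul_cancel_left₀ hpi.ne', one_div, Real.rpow_rpow_inv hM (by linarith)]

lemma l1_le_lp (n : ℕ) (a : Fin (2 * n + 1) → ℝ) (p : ℝ) (hp : 1 ≤ p) :
    l1 n a ≤ torusLpNorm p (trigPoly n a) := by
  have hpi : 0 < 2 * π := by positivity
  rcases (l1_nonneg n a).eq_or_lt with h | h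
  · rw [← h]; exact lp_nonneg n a p
  set L := l1 n a with hL
  have hinteg : ∫ x in (0:ℝ)..(2 * π), |trigPoly n a x| = 2 * π * L := by
    rw [hL, l1]; field_simp
  have hLp : 0 < L ^ p := Real.rpow_pos_of_pos h p
  have hpt : ∀ x, L ^ p * (1 + p * (|trigPoly n a x| / L - 1)) ≤ |trigPoly n a x| ^ p := by
    intro x
    have h1 := one_add_mul_self_le_rpow_one_add (s := |trigPoly n a x| / L - 1) (p := p)
      (by have : 0 ≤ |trigPoly n a x| / L := by positivity
          linarith) hp
    rw [add_sub_cancel, Real.div_rpow (abs_nonneg _) h.le] at h1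
    calc _ ≤ L ^ p * (|trigPoly n a x| ^ p / L ^ p) := by gcongr
      _ = _ := by field_simp
  have hc := continuous_trig_x n a
  have h2 : ∫ x in (0:ℝ)..(2 * π), L ^ p * (1 + p * (|trigPoly n a x| / L - 1)) ≤ ∫ x in (0:ℝ)..(2 * π), |trigPoly n a x| ^ p := by
    refine intervalIntegral.integral_mono_on hpi.le (Continuous.intervalIntegrable (by fun_prop) _ _) ((continuous_rpow_trig n a p hp).intervalIntegrable _ _) fun x _ => hpt x
  have h3 : ∫ x in (0:ℝ)..(2 * π), L ^ p * (1 + p * (|trigPoly n a x| / L - 1)) = 2 * π * L ^ p := by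
    have e : ∀ x, L ^ p * (1 + p * (|trigPoly n a x| / L - 1)) = L ^ p * (1 - p) + (L ^ p * p / L) * |trigPoly n a x| := by
      intro x; field_simp; ring
    simp_rw [e]
    rw [intervalIntegral.integral_add (by simp) (Continuous.intervalIntegrable (by fun_prop) _ _),
      intervalIntegral.integral_const_mul (L ^ p * p / L), hinteg]
    simp
    field_simp
    ring
  rw [h3] at h2
  unfold torusLpNorm
  calc L = (L ^ p) ^ (1 / p) := by rw [one_div, Real.rpow_rpow_inv h.le (by linarith)]
    _ ≤ _ := by
      apply Real.rpow_le_rpow hLp.le _ (by positivity)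
      rw [inv_mul_eq_div, le_div_iff₀ hpi]; linarith

lemma sup_le_l1 (n : ℕ) (a : Fin (2 * n + 1) → ℝ) :
    supNorm (trigPoly n a) ≤ 8 * π * (2 * n + 1) ^ 2 * l1 n a := by
  have h := localize n a (fun u => |u|) continuous_abs (fun u => abs_nonneg u)
    (fun u v hu huv => by rw [abs_of_nonneg hu, abs_of_nonneg (hu.trans huv)]; exact huv)
  simp only [abs_abs] at h
  rw [abs_of_nonneg (by have := supNorm_nonneg' n a; positivity)] at h
  have hinteg : ∫ x in (0:ℝ)..(2 * π), |trigPoly n a x| = 2 * π * l1 n a := by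
    rw [l1]; field_simp
  rw [hinteg] at h
  linarith

lemma lp_le_avg (n : ℕ) (a : Fin (2 * n + 1) → ℝ) (q : ℝ) (hq : 1 ≤ q) :
    torusLpNorm q (trigPoly n a) ≤ √(2 * n + 1 : ℝ) * (1 + avg n (fun u => |u| ^ q) a) := by
  set r := √(2 * n + 1 : ℝ) with hr
  have hr0 : 0 < r := Real.sqrt_pos.2 (by positivity)
  set v := avg n (fun u => |u| ^ q) a with hv
  have hv0 : 0 ≤ v := avg_nonneg n _ (fun u => by positivity) a
  have e : (2 * π)⁻¹ * ∫ x in (0:ℝ)..(2 * π), |trigPoly n a x| ^ q = r ^ q * v := by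
    rw [hv, avg]
    have : ∀ x, |trigPoly n a x| ^ q = r ^ q * |trigPoly n a x / r| ^ q := by
      intro x
      rw [← Real.mul_rpow hr0.le (abs_nonneg _), abs_div, abs_of_pos hr0]
      congr 1; field_simp
    simp_rw [this]
    rw [intervalIntegral.integral_const_mul]; ring
  unfold torusLpNorm
  rw [e, Real.mul_rpow (by positivity) hv0, one_div, Real.rpow_rpow_inv hr0.le (by linarith)]
  gcongr
  calc v ^ q⁻¹ ≤ (1 + v) ^ q⁻¹ := by
        apply Real.rpow_le_rpow hv0 (by linarith) (by positivity)
    _ ≤ (1 + v) ^ (1:ℝ) := by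
        apply Real.rpow_le_rpow_of_exponent_le (by linarith)
        exact inv_le_one_of_one_le₀ hq
    _ = 1 + v := Real.rpow_one _

lemma continuous_lp (n : ℕ) (p : ℝ) (hp : 1 ≤ p) :
    Continuous fun a : Fin (2 * n + 1) → ℝ => torusLpNorm p (trigPoly n a) := by
  unfold torusLpNorm
  have h1 : Continuous (fun a : Fin (2 * n + 1) → ℝ => ∫ x in (0:ℝ)..(2 * π), |trigPoly n a x| ^ p) := by
    apply intervalIntegral.continuous_parametric_intervalIntegral_of_continuous'
    exact (continuous_trig n).abs.rpow_const fun _ => Or.inr (by linarith)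
  exact (continuous_const.mul h1).rpow_const fun _ => Or.inr (by positivity)

/-- bound on the sup norm through the exponential average -/
lemma sup_sq_le (n : ℕ) (hn : 1 ≤ n) (a : Fin (2 * n + 1) → ℝ) :
    supNorm (trigPoly n a) ^ 2 ≤ 16 * (2 * n + 1) * (5 * Real.log (2 * n + 1) + avg n (fun u => Real.exp (u ^ 2 / 4)) a) := by
  have hN : (0:ℝ) < 2 * n + 1 := by positivity
  set M := supNorm (trigPoly n a) with hM
  set G := avg n (fun u => Real.exp (u ^ 2 / 4)) a with hG
  have hl := localize n a (fun u => Real.exp ((u / √(2 * n + 1 : ℝ)) ^ 2 / 4)) (by fun_prop) (fun u => (Real.exp_pos _).le)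
    (fun u v hu huv => by
      apply Real.exp_le_exp.2; gcongr)
  simp only [div_pow, sq_abs] at hl
  have hinteg : ∫ x in (0:ℝ)..(2 * π), Real.exp (trigPoly n a x ^ 2 / √(2 * n + 1 : ℝ) ^ 2 / 4) = 2 * π * G := by
    rw [hG, avg]; simp only [div_pow]; field_simp
  rw [hinteg, Real.sq_sqrt hN.le] at hl
  set c : ℝ := Real.log (4 * π * (2 * n + 1) ^ 2) with hc
  have hcp : 0 < 4 * π * (2 * n + 1 : ℝ) ^ 2 := by positivity
  set X := M ^ 2 / 2 ^ 2 / (2 * n + 1 : ℝ) / 4 with hX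
  have h1 : X - c + 1 ≤ G := by
    refine (Real.add_one_le_exp (X - c)).trans ?_
    rw [Real.exp_sub, hc, Real.exp_log hcp, div_le_iff₀ hcp]
    linarith
  have hl1 : 1 ≤ Real.log (2 * n + 1) := by
    rw [Real.le_log_iff_exp_le hN]
    have := Real.exp_one_lt_d9
    have : (1:ℝ) ≤ n := by exact_mod_cast hn
    linarith
  have h2 : c ≤ 5 * Real.log (2 * n + 1) + 1 := by
    rw [hc, Real.log_mul (by positivity) (by positivity), Real.log_pow]
    have : Real.log (4 * π) ≤ 3 := by
      rw [Real.log_le_iff_le_exp (by positivity)]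
      have h3 : Real.exp 3 = Real.exp 1 ^ 3 := by rw [← Real.exp_nat_mul]; norm_num
      rw [h3]
      have h4 : (2.7:ℝ) ^ 3 ≤ Real.exp 1 ^ 3 := by
        have := Real.exp_one_gt_d9; gcongr; linarith
      have := Real.pi_lt_d2
      norm_num at h4
      linarith
    push_cast
    linarith
  have h3 : X ≤ 5 * Real.log (2 * n + 1) + G := by linarith
  have h4 : M ^ 2 = 16 * (2 * n + 1) * X := by rw [hX]; field_simp; ring
  rw [h4]; gcongr

/-- lower bound on the first moment on the good event -/
lemma l1_lower (n : ℕ) (a : Fin (2 * n + 1) → ℝ) (hS : (2 * n + 1 : ℝ) / 2 ≤ ∑ i, a i ^ 2)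
    (lam : ℝ) (hlam : 0 < lam) (h2 : lam ^ 2 = 2 * (2 * n + 1) * (avg n (fun u => u ^ 4) a + 1)) :
    (2 * n + 1) ≤ 3 * lam * l1 n a := by
  have hN : (0:ℝ) < 2 * n + 1 := by positivity
  have hpi : 0 < 2 * π := by positivity
  set H := avg n (fun u => u ^ 4) a with hH
  set S := ∑ i, a i ^ 2 with hSd
  have hH0 : 0 ≤ H := avg_nonneg n _ (fun u => by positivity) a
  have hc := continuous_trig_x n a
  have hpt : ∀ x, trigPoly n a x ^ 2 / lam - trigPoly n a x ^ 4 / (4 * lam ^ 3) ≤ |trigPoly n a x| := by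
    intro x
    set v := |trigPoly n a x| / lam with hv
    have hv0 : 0 ≤ v := by positivity
    have e : |trigPoly n a x| = lam * v := by rw [hv]; field_simp
    have e2 : trigPoly n a x ^ 2 = (lam * v) ^ 2 := by rw [← e, sq_abs]
    have e4 : trigPoly n a x ^ 4 = (lam * v) ^ 4 := by
      rw [← e]; exact (Even.pow_abs (by decide) _).symm
    rw [e, e2, e4]
    have : (lam * v) ^ 2 / lam - (lam * v) ^ 4 / (4 * lam ^ 3) = lam * (v ^ 2 - v ^ 4 / 4) := by
      field_simp
    rw [this]
    gcongr
    have h3 : 0 ≤ v ^ 3 / 4 - v + 1 := by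
      nlinarith [mul_nonneg hv0 (sq_nonneg (v - 1)), sq_nonneg (v - 1), mul_nonneg hv0 (sq_nonneg (v - 6/5)), sq_nonneg (v - 6/5)]
    nlinarith [mul_nonneg hv0 h3]
  have h3 : ∫ x in (0:ℝ)..(2 * π), (trigPoly n a x ^ 2 / lam - trigPoly n a x ^ 4 / (4 * lam ^ 3)) ≤ ∫ x in (0:ℝ)..(2 * π), |trigPoly n a x| :=
    intervalIntegral.integral_mono_on hpi.le (Continuous.intervalIntegrable (by fun_prop) _ _) (Continuous.intervalIntegrable (by fun_prop) _ _) fun x _ => hpt x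
  rw [intervalIntegral.integral_sub (Continuous.intervalIntegrable (by fun_prop) _ _) (Continuous.intervalIntegrable (by fun_prop) _ _),
    intervalIntegral.integral_div, intervalIntegral.integral_div, parseval] at h3
  have hinteg : ∫ x in (0:ℝ)..(2 * π), |trigPoly n a x| = 2 * π * l1 n a := by
    rw [l1]; field_simp
  have hinteg4 : ∫ x in (0:ℝ)..(2 * π), trigPoly n a x ^ 4 = 2 * π * ((2 * n + 1) ^ 2 * H) := by
    rw [hH, avg]
    have : ∀ x, (trigPoly n a x / √(2 * n + 1 : ℝ)) ^ 4 = ((2 * n + 1 : ℝ) ^ 2)⁻¹ * trigPoly n a x ^ 4 := by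
      intro x
      rw [div_pow, show √(2 * n + 1 : ℝ) ^ 4 = (√(2 * n + 1 : ℝ) ^ 2) ^ 2 by ring, Real.sq_sqrt hN.le]
      field_simp
    simp_rw [this]
    rw [intervalIntegral.integral_const_mul]
    field_simp
  rw [hinteg, hinteg4] at h3
  have h4 : S / lam - ((2 * n + 1) ^ 2 * H) / (4 * lam ^ 3) ≤ l1 n a := by
    have : 2 * π * (S / lam - ((2 * n + 1) ^ 2 * H) / (4 * lam ^ 3)) ≤ 2 * π * l1 n a := by
      refine le_trans (le_of_eq ?_) h3
      ring
    exact le_of_mul_le_mul_left this hpi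
  have h5 : ((2 * n + 1 : ℝ) ^ 2 * H) / (4 * lam ^ 3) ≤ (2 * n + 1) / (8 * lam) := by
    rw [div_le_div_iff₀ (by positivity) (by positivity)]
    have : (2 * n + 1 : ℝ) * H ≤ lam ^ 2 / 2 := by rw [h2]; nlinarith
    calc (2 * n + 1 : ℝ) ^ 2 * H * (8 * lam) = (8 * lam * (2 * n + 1)) * ((2 * n + 1) * H) := by ring
      _ ≤ (8 * lam * (2 * n + 1)) * (lam ^ 2 / 2) := by gcongr
      _ = _ := by ring
  have h6 : (2 * n + 1 : ℝ) / 2 / lam ≤ S / lam := by gcongr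
  have h7 : (2 * n + 1 : ℝ) / 2 / lam - (2 * n + 1) / (8 * lam) ≤ l1 n a := by linarith
  have h8 : (2 * n + 1 : ℝ) / 2 / lam - (2 * n + 1) / (8 * lam) = (3 * (2 * n + 1) / 8) / lam := by
    field_simp; ring
  rw [h8, div_le_iff₀ hlam] at h7
  linarith

lemma ratio_bound (n : ℕ) (hn : 1 ≤ n) (a : Fin (2 * n + 1) → ℝ) :
    supNorm (trigPoly n a) / l1 n a ≤
      √(Real.log (2 * n + 1)) * (123 + 24 * avg n (fun u => Real.exp (u ^ 2 / 4)) a + 3 * avg n (fun u => u ^ 4) a)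
      + 8 * π * (2 * n + 1) ^ 2 * Real.exp ((2 * n + 1) / 4) * Real.exp (-(∑ i, a i ^ 2) / 2) := by
  have hN : (0:ℝ) < 2 * n + 1 := by positivity
  have hM0 := supNorm_nonneg' n a
  have hsq := sup_sq_le n hn a
  set M := supNorm (trigPoly n a) with hM
  set G := avg n (fun u => Real.exp (u ^ 2 / 4)) a with hG
  set H := avg n (fun u => u ^ 4) a with hH
  have hH0 : 0 ≤ H := avg_nonneg n _ (fun u => by positivity) a
  have hG0 : 0 ≤ G := avg_nonneg n _ (fun u => by positivity) a
  have hl1 : 1 ≤ Real.log (2 * n + 1) := by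
    rw [Real.le_log_iff_exp_le hN]
    have := Real.exp_one_lt_d9
    have : (1:ℝ) ≤ n := by exact_mod_cast hn
    linarith
  set w := √(Real.log (2 * n + 1)) with hw
  have hw1 : 1 ≤ w := by rw [hw]; exact Real.one_le_sqrt.2 hl1
  have hw2 : Real.log (2 * n + 1) = w ^ 2 := by rw [hw, Real.sq_sqrt (by linarith)]
  rw [hw2] at hsq
  by_cases hS : (2 * n + 1 : ℝ) / 2 ≤ ∑ i, a i ^ 2
  · set lam := √(2 * (2 * n + 1) * (H + 1)) with hlam
    have hlp : 0 < lam := Real.sqrt_pos.2 (by positivity)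
    have hl2 : lam ^ 2 = 2 * (2 * n + 1) * (H + 1) := Real.sq_sqrt (by positivity)
    have h1 := l1_lower n a hS lam hlp hl2
    have hL : 0 < l1 n a := by
      by_contra h
      have : l1 n a ≤ 0 := not_lt.1 h
      nlinarith
    have h2 : M / l1 n a ≤ 3 * lam * M / (2 * n + 1) := by
      rw [div_le_div_iff₀ hL hN]
      nlinarith
    have h3 : 3 * lam * M / (2 * n + 1) ≤ w * (123 + 24 * G + 3 * H) := by
      rw [div_le_iff₀ hN]
      have h4 : 2 * lam * M ≤ M ^ 2 / w + lam ^ 2 * w := by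
        have : M ^ 2 / w + lam ^ 2 * w - 2 * lam * M = (M - lam * w) ^ 2 / w := by field_simp; ring
        have h5 : 0 ≤ (M - lam * w) ^ 2 / w := by positivity
        linarith
      have h5 : M ^ 2 / w ≤ 16 * (2 * n + 1) * (5 + G) * w := by
        rw [div_le_iff₀ (by linarith)]
        refine hsq.trans ?_
        have : 5 * w ^ 2 + G ≤ (5 + G) * w ^ 2 := by nlinarith
        calc _ ≤ 16 * (2 * n + 1) * ((5 + G) * w ^ 2) := by gcongr
          _ = _ := by ring
      rw [hl2] at h4
      calc 3 * lam * M = (3/2) * (2 * lam * M) := by ring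
        _ ≤ (3/2) * (16 * (2 * n + 1) * (5 + G) * w + 2 * (2 * n + 1) * (H + 1) * w) := by gcongr; linarith
        _ = _ := by ring
    have : 0 ≤ 8 * π * (2 * n + 1) ^ 2 * Real.exp ((2 * n + 1) / 4) * Real.exp (-(∑ i, a i ^ 2) / 2) := by positivity
    linarith
  · push Not at hS
    have h1 : M / l1 n a ≤ 8 * π * (2 * n + 1) ^ 2 :=
      div_le_of_le_mul₀ (l1_nonneg n a) (by positivity) (sup_le_l1 n a)
    have h2 : 1 ≤ Real.exp ((2 * n + 1) / 4) * Real.exp (-(∑ i, a i ^ 2) / 2) := by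
      rw [← Real.exp_add]
      apply Real.one_le_exp
      linarith
    have h3 : 0 ≤ w * (123 + 24 * G + 3 * H) := by positivity
    have h4 : 8 * π * (2 * n + 1 : ℝ) ^ 2 * 1 ≤ 8 * π * (2 * n + 1) ^ 2 * (Real.exp ((2 * n + 1) / 4) * Real.exp (-(∑ i, a i ^ 2) / 2)) := by
      gcongr
    linarith

lemma log_ge_one (n : ℕ) (hn : 1 ≤ n) : 1 ≤ Real.log (2 * n + 1 : ℝ) := by
  have hN : (0:ℝ) < 2 * n + 1 := by positivity
  rw [Real.le_log_iff_exp_le hN]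
  have := Real.exp_one_lt_d9
  have : (1:ℝ) ≤ n := by exact_mod_cast hn
  linarith

lemma ratio_le (n : ℕ) (p : ℝ) (hp : 1 ≤ p) (a : Fin (2 * n + 1) → ℝ) :
    supNorm (trigPoly n a) / torusLpNorm p (trigPoly n a) ≤ supNorm (trigPoly n a) / l1 n a := by
  have hM := supNorm_nonneg' n a
  have h1 := l1_le_lp n a p hp
  have h2 := sup_le_l1 n a
  rcases (l1_nonneg n a).eq_or_lt with h | h
  · rw [← h, mul_zero] at h2
    rw [le_antisymm h2 hM]; simp
  · gcongr

lemma ratio_le_const (n : ℕ) (a : Fin (2 * n + 1) → ℝ) :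
    supNorm (trigPoly n a) / l1 n a ≤ 8 * π * (2 * n + 1) ^ 2 :=
  div_le_of_le_mul₀ (l1_nonneg n a) (by positivity) (sup_le_l1 n a)

lemma integrable_X (n : ℕ) (p : ℝ) (hp : 1 ≤ p) :
    Integrable (fun a => supNorm (trigPoly n a) / torusLpNorm p (trigPoly n a)) (gmu n) := by
  refine Integrable.of_bound (C := 8 * π * (2 * n + 1) ^ 2) ?_ (Filter.Eventually.of_forall fun a => ?_)
  · exact ((continuous_supNorm n).measurable.div (continuous_lp n p hp).measurable).aestronglyMeasurable
  · rw [Real.norm_eq_abs, abs_of_nonneg (div_nonneg (supNorm_nonneg' n a) (lp_nonneg n a p))]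
    exact (ratio_le n p hp a).trans (ratio_le_const n a)

lemma Y_le_one (n : ℕ) (q : ℝ) (hq : 1 ≤ q) (a : Fin (2 * n + 1) → ℝ) :
    torusLpNorm q (trigPoly n a) / supNorm (trigPoly n a) ≤ 1 :=
  div_le_one_of_le₀ (lp_le_sup n a q hq) (supNorm_nonneg' n a)

lemma integrable_Y (n : ℕ) (q : ℝ) (hq : 1 ≤ q) :
    Integrable (fun a => torusLpNorm q (trigPoly n a) / supNorm (trigPoly n a)) (gmu n) := by
  refine Integrable.of_bound (C := 1) ?_ (Filter.Eventually.of_forall fun a => ?_)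
  · exact ((continuous_lp n q hq).measurable.div (continuous_supNorm n).measurable).aestronglyMeasurable
  · rw [Real.norm_eq_abs, abs_of_nonneg (div_nonneg (lp_nonneg n a q) (supNorm_nonneg' n a))]
    exact Y_le_one n q hq a

lemma ae_ne_zero (n : ℕ) : ∀ᵐ a ∂(gmu n), a ≠ 0 := by
  rw [ae_iff]
  simp only [ne_eq, not_not]
  have : {a : Fin (2 * n + 1) → ℝ | a = 0} = Set.univ.pi fun _ => {(0:ℝ)} := by
    ext a
    simp [funext_iff]
  rw [this, Measure.pi_pi]
  have h0 : gaussianReal 0 1 {(0:ℝ)} = 0 :=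
    gaussianReal_absolutelyContinuous 0 one_ne_zero (by simp)
  simp [h0]

lemma XY_one (n : ℕ) (p : ℝ) (hp : 1 ≤ p) :
    ∀ᵐ a ∂(gmu n), 0 < supNorm (trigPoly n a) / torusLpNorm p (trigPoly n a) := by
  filter_upwards [ae_ne_zero n] with a ha
  have hM : 0 < supNorm (trigPoly n a) := by
    obtain ⟨i, hi⟩ := Function.ne_iff.1 ha
    exact (abs_pos.2 hi).trans_le (coef_le n a i)
  have hL : 0 < l1 n a := by
    rcases (l1_nonneg n a).eq_or_lt with h | h
    · have := sup_le_l1 n a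
      rw [← h, mul_zero] at this
      linarith
    · exact h
  have := hL.trans_le (l1_le_lp n a p hp)
  positivity

lemma X_int_ge_one (n : ℕ) (p : ℝ) (hp : 1 ≤ p) :
    1 ≤ ∫ a, supNorm (trigPoly n a) / torusLpNorm p (trigPoly n a) ∂(gmu n) := by
  have : ∫ a, (1:ℝ) ∂(gmu n) ≤ ∫ a, supNorm (trigPoly n a) / torusLpNorm p (trigPoly n a) ∂(gmu n) := by
    refine integral_mono_ae (by simp) (integrable_X n p hp) ?_
    filter_upwards [XY_one n p hp] with a ha
    have hlp : 0 < torusLpNorm p (trigPoly n a) := by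
      rcases (lp_nonneg n a p).eq_or_lt with h | h
      · rw [← h] at ha; simp at ha
      · exact h
    show 1 ≤ supNorm (trigPoly n a) / torusLpNorm p (trigPoly n a)
    rw [one_le_div hlp]
    exact lp_le_sup n a p hp
  simpa using this

lemma jensen_XY (n : ℕ) (p : ℝ) (hp : 1 ≤ p) :
    (∫ a, supNorm (trigPoly n a) / torusLpNorm p (trigPoly n a) ∂(gmu n))⁻¹ ≤
      ∫ a, torusLpNorm p (trigPoly n a) / supNorm (trigPoly n a) ∂(gmu n) := by
  have h1 := X_int_ge_one n p hp
  set E := ∫ a, supNorm (trigPoly n a) / torusLpNorm p (trigPoly n a) ∂(gmu n) with hE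
  have hI := integrable_X n p hp
  have hJ := integrable_Y n p hp
  have h2 : ∫ a, (2 * E⁻¹ - E⁻¹ ^ 2 * (supNorm (trigPoly n a) / torusLpNorm p (trigPoly n a))) ∂(gmu n) ≤
      ∫ a, torusLpNorm p (trigPoly n a) / supNorm (trigPoly n a) ∂(gmu n) := by
    refine integral_mono_ae ((integrable_const _).sub (hI.const_mul _)) hJ ?_
    filter_upwards [XY_one n p hp] with a ha
    show 2 * E⁻¹ - E⁻¹ ^ 2 * (supNorm (trigPoly n a) / torusLpNorm p (trigPoly n a)) ≤ torusLpNorm p (trigPoly n a) / supNorm (trigPoly n a)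
    rw [← inv_div (supNorm (trigPoly n a))]
    set X := supNorm (trigPoly n a) / torusLpNorm p (trigPoly n a)
    have : X⁻¹ - (2 * E⁻¹ - E⁻¹ ^ 2 * X) = X * (X⁻¹ - E⁻¹) ^ 2 := by field_simp; ring
    have h3 : 0 ≤ X * (X⁻¹ - E⁻¹) ^ 2 := by positivity
    linarith
  rw [integral_sub (integrable_const _) (hI.const_mul _), integral_const_mul (E⁻¹ ^ 2), ← hE] at h2
  simp only [integral_const, probReal_univ, one_smul] at h2
  have h3 : 2 * E⁻¹ - E⁻¹ ^ 2 * E = E⁻¹ := by field_simp; ring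
  linarith

lemma geom_bound : ∃ K : ℝ, 0 < K ∧ ∀ n : ℕ,
    8 * π * (2 * n + 1 : ℝ) ^ 2 * Real.exp ((2 * n + 1) / 4) * ((√2)⁻¹) ^ (2 * n + 1) ≤ K := by
  have hr : |Real.exp (1/4) * (√2)⁻¹| < 1 := by
    rw [abs_of_pos (by positivity), ← div_eq_mul_inv, div_lt_one (by positivity)]
    apply lt_of_pow_lt_pow_left₀ 4 (by positivity)
    rw [← Real.exp_nat_mul, show √(2:ℝ) ^ 4 = (√2 ^ 2) ^ 2 by ring, Real.sq_sqrt (by norm_num)]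
    have := Real.exp_one_lt_d9
    norm_num
    linarith
  have ht := tendsto_pow_const_mul_const_pow_of_abs_lt_one 2 hr
  obtain ⟨K, hK⟩ := ht.bddAbove_range
  refine ⟨8 * π * (|K| + 1), by positivity, fun n => ?_⟩
  have h1 := hK ⟨2 * n + 1, rfl⟩
  simp only [mul_pow] at h1
  rw [← Real.exp_nat_mul] at h1
  push_cast at h1
  have e : (2 * n + 1 : ℝ) * (1 / 4) = (2 * n + 1) / 4 := by ring
  rw [e] at h1
  have h2 : K ≤ |K| + 1 := by linarith [le_abs_self K]
  calc _ = 8 * π * ((2 * n + 1 : ℝ) ^ 2 * (Real.exp ((2 * n + 1) / 4) * ((√2)⁻¹) ^ (2 * n + 1))) := by ring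
    _ ≤ _ := by gcongr; linarith

lemma upper_X (p : ℝ) (hp : 1 ≤ p) : ∃ C : ℝ, 0 < C ∧ ∀ n : ℕ, 1 ≤ n →
    ∫ a, supNorm (trigPoly n a) / torusLpNorm p (trigPoly n a) ∂(gmu n) ≤ C * √(Real.log (2 * n + 1 : ℝ)) := by
  obtain ⟨K, hK0, hK⟩ := geom_bound
  set g := ∫ u : ℝ, Real.exp (u ^ 2 / 4) ∂(gaussianReal 0 1) with hg
  set h := ∫ u : ℝ, u ^ 4 ∂(gaussianReal 0 1) with hh
  have hg0 : 0 ≤ g := integral_nonneg fun u => (Real.exp_pos _).le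
  have hh0 : 0 ≤ h := integral_nonneg fun u => by positivity
  have h4 : Integrable (fun u : ℝ => u ^ 4) (gaussianReal 0 1) := by
    have := integrable_gpow 4 (by norm_num)
    refine this.congr (Filter.Eventually.of_forall fun u => ?_)
    show |u| ^ (4:ℝ) = u ^ 4
    rw [show (4:ℝ) = ((4:ℕ):ℝ) by norm_num, Real.rpow_natCast]
    exact Even.pow_abs (by decide) _
  refine ⟨123 + 24 * g + 3 * h + K, by positivity, fun n hn => ?_⟩
  obtain ⟨i1, e1⟩ := avg_spec n _ integrable_gexp
  obtain ⟨i2, e2⟩ := avg_spec n _ h4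
  obtain ⟨i3, e3⟩ := exp_sum_spec n
  set w := √(Real.log (2 * n + 1)) with hw
  have hw1 : 1 ≤ w := by rw [hw]; exact Real.one_le_sqrt.2 (log_ge_one n hn)
  have j1 := ((integrable_const (μ := gmu n) (123:ℝ)).add (i1.const_mul 24)).add (i2.const_mul 3)
  have j2 := j1.const_mul w
  have j3 := i3.const_mul (8 * π * (2 * n + 1) ^ 2 * Real.exp ((2 * n + 1) / 4))
  calc _ ≤ ∫ a, (w * (123 + 24 * avg n (fun u => Real.exp (u ^ 2 / 4)) a + 3 * avg n (fun u => u ^ 4) a)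
      + 8 * π * (2 * n + 1) ^ 2 * Real.exp ((2 * n + 1) / 4) * Real.exp (-(∑ i, a i ^ 2) / 2)) ∂(gmu n) := by
        refine integral_mono (integrable_X n p hp) (j2.add j3) fun a => ?_
        exact (ratio_le n p hp a).trans (ratio_bound n hn a)
    _ = w * (123 + 24 * g + 3 * h) + 8 * π * (2 * n + 1) ^ 2 * Real.exp ((2 * n + 1) / 4) * ((√2)⁻¹) ^ (2 * n + 1) := by
        refine (integral_add j2 j3).trans ?_
        rw [integral_const_mul, integral_const_mul, e3]
        congr 2
        refine (integral_add ((integrable_const (μ := gmu n) (123:ℝ)).add (i1.const_mul 24)) (i2.const_mul 3)).trans ?_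
        congr 1
        · refine (integral_add (integrable_const (μ := gmu n) (123:ℝ)) (i1.const_mul 24)).trans ?_
          rw [integral_const_mul, e1]; simp [hg]
        · rw [integral_const_mul, e2]
    _ ≤ w * (123 + 24 * g + 3 * h) + K := by gcongr; exact hK n
    _ ≤ _ := by nlinarith

lemma upper_Y (q : ℝ) (hq : 1 ≤ q) : ∃ C : ℝ, 0 < C ∧ ∀ n : ℕ, 1 ≤ n →
    ∫ a, torusLpNorm q (trigPoly n a) / supNorm (trigPoly n a) ∂(gmu n) ≤ C * (√(Real.log (2 * n + 1 : ℝ)))⁻¹ := by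
  set m := ∫ u : ℝ, |u| ^ q ∂(gaussianReal 0 1) with hm
  have hm0 : 0 ≤ m := integral_nonneg fun u => by positivity
  refine ⟨√2 * (1 + m) + Real.exp 2, by positivity, fun n hn => ?_⟩
  have hN : (0:ℝ) < 2 * n + 1 := by positivity
  have hl := log_ge_one n hn
  obtain ⟨i1, e1⟩ := avg_spec n _ (integrable_gpow q hq)
  set ℓ := Real.log (2 * n + 1 : ℝ) with hℓ
  set t := √(ℓ / 2) with ht
  have ht0 : 0 < t := Real.sqrt_pos.2 (by linarith)
  have ht2 : t ^ 2 = ℓ / 2 := Real.sq_sqrt (by linarith)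
  set r := √(2 * n + 1 : ℝ) with hr
  have hr0 : 0 < r := Real.sqrt_pos.2 hN
  set B := {a : Fin (2 * n + 1) → ℝ | supNorm (trigPoly n a) ≤ t * r} with hB
  have hBm : MeasurableSet B := measurableSet_le (continuous_supNorm n).measurable measurable_const
  have hpt : ∀ a, torusLpNorm q (trigPoly n a) / supNorm (trigPoly n a) ≤
      t⁻¹ * (1 + avg n (fun u => |u| ^ q) a) + B.indicator (fun _ => (1:ℝ)) a := by
    intro a
    have hv0 : 0 ≤ avg n (fun u => |u| ^ q) a := avg_nonneg n _ (fun u => by positivity) a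
    by_cases ha : a ∈ B
    · rw [Set.indicator_of_mem ha]
      have := Y_le_one n q hq a
      have : 0 ≤ t⁻¹ * (1 + avg n (fun u => |u| ^ q) a) := by positivity
      linarith
    · rw [Set.indicator_of_notMem ha, add_zero]
      have hab : t * r < supNorm (trigPoly n a) := not_le.1 ha
      have h1 := lp_le_avg n a q hq
      rw [← hr] at h1
      calc _ ≤ (r * (1 + avg n (fun u => |u| ^ q) a)) / (t * r) := by gcongr
        _ = _ := by field_simp
  have j1 := ((integrable_const (μ := gmu n) (1:ℝ)).add i1).const_mul t⁻¹
  have j2 : Integrable (B.indicator fun _ => (1:ℝ)) (gmu n) := (integrable_const _).indicator hBm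
  have hs := sup_small n t
  have h5 : Real.exp (2 + t ^ 2) / (2 * n + 1) ≤ Real.exp 2 * (√ℓ)⁻¹ := by
    have : Real.exp (t ^ 2) = r := by
      rw [ht2, hr, hℓ, Real.exp_half, Real.exp_log hN]
    rw [Real.exp_add, this, mul_div_assoc]
    gcongr
    have e : r / (2 * n + 1) = r⁻¹ := by
      have : (2 * n + 1 : ℝ) = r * r := (Real.mul_self_sqrt hN.le).symm
      rw [this]; field_simp
    rw [e]
    apply inv_anti₀ (by positivity)
    apply Real.sqrt_le_sqrt
    have := Real.log_le_sub_one_of_pos hN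
    linarith
  have h6 : t⁻¹ = √2 * (√ℓ)⁻¹ := by
    rw [ht, Real.sqrt_div (by linarith), inv_div, div_eq_mul_inv]
  calc _ ≤ ∫ a, (t⁻¹ * (1 + avg n (fun u => |u| ^ q) a) + B.indicator (fun _ => (1:ℝ)) a) ∂(gmu n) :=
        integral_mono (integrable_Y n q hq) (j1.add j2) hpt
    _ = t⁻¹ * (1 + m) + (gmu n).real B := by
        refine (integral_add j1 j2).trans ?_
        congr 1
        · rw [integral_const_mul]
          congr 1
          refine (integral_add (integrable_const (μ := gmu n) (1:ℝ)) i1).trans ?_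
          rw [e1]; simp [hm]
        · rw [integral_indicator hBm]; simp [measureReal_def]
    _ ≤ t⁻¹ * (1 + m) + Real.exp 2 * (√ℓ)⁻¹ := by gcongr; exact hs.trans h5
    _ = _ := by rw [h6]; ring

/-- For `1 ≤ p < ∞`, `E[‖T_a‖_∞ / ‖T_a‖_p] ≍ (log N)^{1/2}`, and for `1 ≤ q < ∞`,
`E[‖T_a‖_q / ‖T_a‖_∞] ≍ (log N)^{-1/2}`, where `N = 2n+1`. -/
theorem average_nikolskii_sup_norm (p q : ℝ) (hp : 1 ≤ p) (hq : 1 ≤ q) :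
    (∃ c C : ℝ, 0 < c ∧ 0 < C ∧ ∀ n : ℕ, 1 ≤ n →
      c * Real.log (2 * n + 1 : ℝ) ^ ((1 : ℝ) / 2) ≤
          (∫ a : Fin (2 * n + 1) → ℝ,
            supNorm (trigPoly n a) / torusLpNorm p (trigPoly n a)
            ∂(Measure.pi fun _ => gaussianReal 0 1)) ∧
        (∫ a : Fin (2 * n + 1) → ℝ,
            supNorm (trigPoly n a) / torusLpNorm p (trigPoly n a)
            ∂(Measure.pi fun _ => gaussianReal 0 1)) ≤
          C * Real.log (2 * n + 1 : ℝ) ^ ((1 : ℝ) / 2)) ∧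
    (∃ c C : ℝ, 0 < c ∧ 0 < C ∧ ∀ n : ℕ, 1 ≤ n →
      c * Real.log (2 * n + 1 : ℝ) ^ (-(1 : ℝ) / 2) ≤
          (∫ a : Fin (2 * n + 1) → ℝ,
            torusLpNorm q (trigPoly n a) / supNorm (trigPoly n a)
            ∂(Measure.pi fun _ => gaussianReal 0 1)) ∧
        (∫ a : Fin (2 * n + 1) → ℝ,
            torusLpNorm q (trigPoly n a) / supNorm (trigPoly n a)
            ∂(Measure.pi fun _ => gaussianReal 0 1)) ≤
          C * Real.log (2 * n + 1 : ℝ) ^ (-(1 : ℝ) / 2)) := by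
  obtain ⟨C1, hC1, h1⟩ := upper_X p hp
  obtain ⟨C2, hC2, h2⟩ := upper_Y p hp
  obtain ⟨C3, hC3, h3⟩ := upper_X q hq
  obtain ⟨C4, hC4, h4⟩ := upper_Y q hq
  have hneg : ∀ n : ℕ, Real.log (2 * n + 1 : ℝ) ^ (-(1 : ℝ) / 2) = (√(Real.log (2 * n + 1 : ℝ)))⁻¹ := by
    intro n
    have hl : 0 ≤ Real.log (2 * n + 1 : ℝ) := Real.log_nonneg (by
      have : (0:ℝ) ≤ n := Nat.cast_nonneg n
      linarith)
    rw [neg_div, Real.rpow_neg hl, Real.sqrt_eq_rpow]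
  refine ⟨⟨C2⁻¹, C1, by positivity, hC1, fun n hn => ?_⟩, ⟨C3⁻¹, C4, by positivity, hC4, fun n hn => ?_⟩⟩
  · rw [← Real.sqrt_eq_rpow]
    refine ⟨?_, h1 n hn⟩
    have hw : 0 < √(Real.log (2 * n + 1 : ℝ)) := Real.sqrt_pos.2 (by linarith [log_ge_one n hn])
    have hX := X_int_ge_one n p hp
    have hj := (jensen_XY n p hp).trans (h2 n hn)
    have hj2 := inv_anti₀ (inv_pos.2 (by linarith)) hj
    rw [inv_inv, mul_inv, inv_inv] at hj2
    exact hj2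
  · rw [hneg]
    refine ⟨?_, h4 n hn⟩
    have hX := X_int_ge_one n q hq
    have hj := inv_anti₀ (by linarith) (h3 n hn)
    rw [mul_inv] at hj
    exact hj.trans (jensen_XY n q hq)
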